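/- For all j ≥ 0 and all m ∈ S, the reduced simplicial homology groups over a field k satisfy H̃_j(∇_m) ≅ H̃_j(Δ_m). -/

import Mathlib

section SimplicialHomology

variable (k : Type) [Field k] {V : Type} [LinearOrder V]

/-- The (reduced) simplicial boundary operator on formal `k`-linear combinations of finite
subsets of the (linearly ordered) vertex set `V`, with the usual alternating signs. -/
noncomputable def sBoundary : (Finset V →₀ k) →ₗ[k] (Finset V →₀ k) :=
  Finsupp.lsum k fun F =>
    LinearMap.toSpanSingleton k _
      (∑ x ∈ F, ((-1 : k) ^ (F.filter (fun y => y < x)).card) •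
        Finsupp.single (F.erase x) (1 : k))

/-- The faces of cardinality `c` of the simplicial complex `K` (the empty face is always
included, so that the chain complex below computes *reduced* homology). -/
def sFaces (K : Set (Finset V)) (c : ℕ) : Set (Finset V) :=
  {F | F.card = c ∧ (F = ∅ ∨ F ∈ K)}

/-- The reduced `j`-cycles `Z̃_j(K)`: chains supported on the `j`-dimensional faces
(of cardinality `j+1`) killed by the boundary operator. -/
noncomputable def sCycles (K : Set (Finset V)) (j : ℕ) : Submodule k (Finset V →₀ k) :=
  Finsupp.supported k k (sFaces K (j + 1)) ⊓ LinearMap.ker (sBoundary k)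

/-- The reduced `j`-boundaries `B̃_j(K)`: images under the boundary operator of chains
supported on the `(j+1)`-dimensional faces (of cardinality `j+2`). -/
noncomputable def sBoundaries (K : Set (Finset V)) (j : ℕ) : Submodule k (Finset V →₀ k) :=
  Submodule.map (sBoundary k) (Finsupp.supported k k (sFaces K (j + 2)))

/-- The reduced `j`-th simplicial homology `H̃_j(K) = Z̃_j(K)/B̃_j(K)` of `K` with
coefficients in `k`, realized as the image of the cycles in the quotient of the chain
space by the boundaries. -/
noncomputable def sHred (K : Set (Finset V)) (j : ℕ) :
    Submodule k ((Finset V →₀ k) ⧸ sBoundaries k K j) :=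
  Submodule.map (sBoundaries k K j).mkQ (sCycles k K j)

end SimplicialHomology

/-- The simplicial complex `∇_m` on the vertex set `C_m ⊆ ℕ^r` (with the lexicographic
linear order on vertices): nonempty subsets of factorizations of `m` whose componentwise
minimum is nonzero, i.e. whose monomials have a nontrivial common divisor. -/
def nablaLex {G : Type} [AddCommGroup G] {r : ℕ} (n : Fin r → G) (m : G) :
    Set (Finset (Lex (Fin r →₀ ℕ))) :=
  {F | F.Nonempty ∧ (∀ a ∈ F, ((ofLex a).sum fun i e => e • n i) = m) ∧
    ∃ i, ∀ a ∈ F, 0 < ofLex a i}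

/-- The simplicial complex `Δ_m` on the vertex set `{1,…,r}`: nonempty subsets `F` with
`m − n_F ∈ S`. -/
def deltaComplex {G : Type} [AddCommGroup G] (S : AddSubmonoid G) {r : ℕ} (n : Fin r → G)
    (m : G) : Set (Finset (Fin r)) :=
  {F | F.Nonempty ∧ ∃ s ∈ S, (∑ i ∈ F, n i) + s = m}

/-!
Both complexes come from one relation, that of a factorization `α` of `m` to a generator it uses:
`∇_m` consists of the sets of factorizations sharing a generator, `Δ_m` of the sets of generators
occurring together in a factorization. They are the two Dowker complexes of this relation between
`X = C_m` and `Y = {1,…,r}`, and the theorem is Dowker duality.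

For the duality, both Dowker complexes are induced subcomplexes of one complex `J` on the disjoint
union of `X` and `Y`, a simplicial version of the mapping cylinder in the Nerve Lemma. A face of `J`
that sticks out of `X` can be coned off by a point of `X` that depends only on the part sticking
out. If `H` is the operator that does this, the chain map `1 - ∂H - H∂` is homotopic to the
identity, fixes the chains on `X`, and lowers the number of vertices sticking out: deleting a vertex
of `X` from a face does not change its apex, so those terms of `H∂` cancel against `∂H`. Iterating
it retracts the chains of `J` onto those of the Dowker complex on `X`, and likewise for `Y`.
-/

section LinearAlgebra

theorem map_supported_le_iff {R α M : Type*} [Semiring R] [AddCommMonoid M] [Module R M]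
    {s : Set α} {φ : (α →₀ R) →ₗ[R] M} {W : Submodule R M} :
    (Finsupp.supported R R s).map φ ≤ W ↔ ∀ x ∈ s, φ (Finsupp.single x 1) ∈ W := by
  rw [Finsupp.supported_eq_span_single, Submodule.map_span_le, Set.forall_mem_image]

theorem nonempty_map_mkQ_equiv {R M N : Type*} [Ring R] [AddCommGroup M] [AddCommGroup N]
    [Module R M] [Module R N] {Z B : Submodule R M} {Z' B' : Submodule R N} (φ : M →ₗ[R] N)
    (hB : B'.comap φ = B) (hZ : Z.map φ ⊔ B' = Z' ⊔ B') :
    Nonempty (↥(Z.map B.mkQ) ≃ₗ[R] ↥(Z'.map B'.mkQ)) := by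
  let Φ : M ⧸ B →ₗ[R] N ⧸ B' := B.mapQ B' φ hB.ge
  have hΦ : Function.Injective Φ := by
    rw [← LinearMap.ker_eq_bot, Submodule.ker_mapQ, hB, Submodule.mkQ_map_self]
  have map_sup_mkQ (W : Submodule R N) : (W ⊔ B').map B'.mkQ = W.map B'.mkQ := by
    rw [Submodule.map_sup, Submodule.mkQ_map_self, sup_bot_eq]
  have map_Φ : (Z.map B.mkQ).map Φ = Z'.map B'.mkQ := by
    rw [← Submodule.map_comp, Submodule.mapQ_mkQ, Submodule.map_comp, ← map_sup_mkQ, hZ,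
      map_sup_mkQ]
  exact ⟨(Submodule.equivMapOfInjective Φ hΦ _).trans (LinearEquiv.ofEq _ _ map_Φ)⟩

end LinearAlgebra

section VertexSign

variable (k : Type*) [CommRing k] {V : Type*} [LinearOrder V]

/-- The incidence sign `(-1) ^ i` with which the facet `F.erase x` enters the boundary of `F`, where
`i` is the position of `x` in the increasing enumeration of `F`. It makes sense for `x ∉ F` too. -/
def vertexSign (x : V) (F : Finset V) : k :=
  (-1) ^ (F.filter (· < x)).card

theorem vertexSign_mul_self (x : V) (F : Finset V) : vertexSign k x F * vertexSign k x F = 1 := by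
  rw [vertexSign, ← mul_pow, neg_mul_neg, one_mul, one_pow]

theorem vertexSign_insert_self (x : V) (F : Finset V) :
    vertexSign k x (insert x F) = vertexSign k x F := by
  rw [vertexSign, Finset.filter_insert, if_neg (lt_irrefl x), vertexSign]

theorem vertexSign_insert_of_lt {v x : V} {F : Finset V} (hv : v ∉ F) (h : v < x) :
    vertexSign k x (insert v F) = -vertexSign k x F := by
  rw [vertexSign, Finset.filter_insert, if_pos h, Finset.card_insert_of_notMem (by simp [hv]),
    pow_succ, mul_neg_one, vertexSign]

theorem vertexSign_insert_of_gt {v x : V} (F : Finset V) (h : x < v) :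
    vertexSign k x (insert v F) = vertexSign k x F := by
  rw [vertexSign, Finset.filter_insert, if_neg h.not_gt, vertexSign]

theorem vertexSign_insert_antisymm {v x : V} {F : Finset V} (hv : v ∉ F) (hx : x ∉ F)
    (hxv : x ≠ v) :
    vertexSign k v (insert x F) * vertexSign k x (insert v F) +
      vertexSign k x F * vertexSign k v F = 0 := by
  rcases lt_or_gt_of_ne hxv with h | h
  · rw [vertexSign_insert_of_lt k hx h, vertexSign_insert_of_gt k F h]
    ring
  · rw [vertexSign_insert_of_gt k F h, vertexSign_insert_of_lt k hv h]
    ring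

theorem vertexSign_map {X : Type*} [LinearOrder X] (a : X ↪o V) (x : X) (F : Finset X) :
    vertexSign k (a x) (F.map a.toEmbedding) = vertexSign k x F := by
  simp only [vertexSign, Finset.filter_map, Finset.card_map, Function.comp_def,
    RelEmbedding.coe_toEmbedding, a.lt_iff_lt]

end VertexSign

section Cone

variable (k : Type) [Field k] {V : Type} [LinearOrder V]

theorem sBoundary_single (F : Finset V) :
    sBoundary k (Finsupp.single F 1) =
      ∑ x ∈ F, vertexSign k x F • Finsupp.single (F.erase x) (1 : k) := by
  simp [sBoundary, vertexSign]

/-- The cone operator `F ↦ ± (F ∪ {v})` with apex `v`, which kills the sets containing `v`. -/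
noncomputable def coneMap (v : V) : (Finset V →₀ k) →ₗ[k] (Finset V →₀ k) :=
  Finsupp.linearCombination k fun F =>
    if v ∈ F then 0 else vertexSign k v F • Finsupp.single (insert v F) 1

theorem coneMap_single_of_mem {v : V} {F : Finset V} (hv : v ∈ F) :
    coneMap k v (Finsupp.single F 1) = 0 := by
  simp [coneMap, hv]

theorem coneMap_single_of_notMem {v : V} {F : Finset V} (hv : v ∉ F) :
    coneMap k v (Finsupp.single F 1) = vertexSign k v F • Finsupp.single (insert v F) 1 := by
  simp [coneMap, hv]

theorem single_insert_eq_smul_coneMap {v : V} {F : Finset V} (hv : v ∉ F) :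
    Finsupp.single (insert v F) 1 = vertexSign k v F • coneMap k v (Finsupp.single F 1) := by
  rw [coneMap_single_of_notMem k hv, smul_smul, vertexSign_mul_self, one_smul]

theorem coneMap_sBoundary_single_insert {v : V} {F : Finset V} (hv : v ∉ F) :
    coneMap k v (sBoundary k (Finsupp.single (insert v F) 1)) = Finsupp.single (insert v F) 1 := by
  rw [sBoundary_single, map_sum, Finset.sum_insert hv, Finset.sum_eq_zero, add_zero,
    Finset.erase_insert hv, vertexSign_insert_self, map_smul, ← single_insert_eq_smul_coneMap k hv]
  intro x hx
  have hvx : v ≠ x := fun h => hv (h ▸ hx)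
  rw [map_smul, coneMap_single_of_mem k (by simp [hvx]), smul_zero]

theorem sBoundary_coneMap_single_of_notMem {v : V} {F : Finset V} (hv : v ∉ F) :
    sBoundary k (coneMap k v (Finsupp.single F 1)) =
      Finsupp.single F 1 - coneMap k v (sBoundary k (Finsupp.single F 1)) := by
  rw [eq_sub_iff_add_eq, coneMap_single_of_notMem k hv, map_smul, sBoundary_single,
    Finset.sum_insert hv, smul_add, vertexSign_insert_self, smul_smul, vertexSign_mul_self,
    one_smul, Finset.erase_insert hv, add_assoc, add_eq_left, sBoundary_single, map_sum,
    Finset.smul_sum, ← Finset.sum_add_distrib]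
  refine Finset.sum_eq_zero fun x hx => ?_
  obtain ⟨F, hxF, rfl⟩ : ∃ F', x ∉ F' ∧ insert x F' = F :=
    ⟨F.erase x, Finset.notMem_erase x F, Finset.insert_erase hx⟩
  obtain ⟨hvx, hvF⟩ : v ≠ x ∧ v ∉ F := by simpa using hv
  rw [Finset.insert_comm, vertexSign_insert_self, Finset.erase_insert (by simp [hvx.symm, hxF]),
    vertexSign_insert_self, Finset.erase_insert hxF, map_smul, coneMap_single_of_notMem k hvF,
    smul_smul, smul_smul, ← add_smul, vertexSign_insert_antisymm k hvF hxF hvx.symm, zero_smul]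

theorem sBoundary_coneMap (v : V) (c : Finset V →₀ k) :
    sBoundary k (coneMap k v c) = c - coneMap k v (sBoundary k c) := by
  suffices sBoundary k ∘ₗ coneMap k v = LinearMap.id - coneMap k v ∘ₗ sBoundary k from
    LinearMap.congr_fun this c
  ext F : 2
  change sBoundary k (coneMap k v (Finsupp.single F 1)) =
    Finsupp.single F 1 - coneMap k v (sBoundary k (Finsupp.single F 1))
  by_cases hv : v ∈ F
  · obtain ⟨F, hvF, rfl⟩ : ∃ F', v ∉ F' ∧ insert v F' = F :=
      ⟨F.erase v, Finset.notMem_erase v F, Finset.insert_erase hv⟩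
    rw [coneMap_single_of_mem k hv, map_zero, coneMap_sBoundary_single_insert k hvF, sub_self]
  · exact sBoundary_coneMap_single_of_notMem k hv

theorem sBoundary_sBoundary (c : Finset V →₀ k) : sBoundary k (sBoundary k c) = 0 := by
  have sBoundary_sBoundary_coneMap (v : V) (c : Finset V →₀ k) :
      sBoundary k (sBoundary k (coneMap k v c)) = coneMap k v (sBoundary k (sBoundary k c)) := by
    rw [sBoundary_coneMap, map_sub, sBoundary_coneMap, sub_sub_cancel]
  suffices sBoundary k ∘ₗ sBoundary k = (0 : (Finset V →₀ k) →ₗ[k] (Finset V →₀ k)) from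
    LinearMap.congr_fun this c
  ext F : 2
  change sBoundary k (sBoundary k (Finsupp.single F 1)) = 0
  induction F using Finset.induction_on with
  | empty => rw [sBoundary_single, Finset.sum_empty, map_zero]
  | insert v F hv ih =>
    rw [single_insert_eq_smul_coneMap k hv, map_smul, map_smul, sBoundary_sBoundary_coneMap, ih,
      map_zero, smul_zero]

end Cone

section Outside

variable {V : Type*}

open Classical in
/-- The set of vertices of `F` that do not lie in `A`. -/
noncomputable def outside (A : Set V) (F : Finset V) : Finset V :=
  F.filter (· ∉ A)

theorem mem_outside {A : Set V} {F : Finset V} {x : V} : x ∈ outside A F ↔ x ∈ F ∧ x ∉ A := by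
  simp [outside]

theorem outside_eq_empty_iff {A : Set V} {F : Finset V} : outside A F = ∅ ↔ (F : Set V) ⊆ A := by
  simp [outside, Finset.filter_eq_empty_iff, Set.subset_def]

theorem outside_subset (A : Set V) (F : Finset V) : outside A F ⊆ F :=
  fun _ hx => (mem_outside.mp hx).1

theorem outside_insert_of_mem [DecidableEq V] {A : Set V} {v : V} (hv : v ∈ A) (F : Finset V) :
    outside A (insert v F) = outside A F := by
  ext x
  simp only [mem_outside, Finset.mem_insert]
  grind

theorem outside_erase [DecidableEq V] (A : Set V) (F : Finset V) (v : V) :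
    outside A (F.erase v) = (outside A F).erase v := by
  ext x
  simp only [mem_outside, Finset.mem_erase]
  tauto

theorem outside_erase_of_mem [DecidableEq V] {A : Set V} {v : V} (hv : v ∈ A) (F : Finset V) :
    outside A (F.erase v) = outside A F := by
  rw [outside_erase, Finset.erase_eq_of_notMem fun h => (mem_outside.mp h).2 hv]

/-- A vertex `v ∈ A` is an apex for `S` if it can be added to every face of `J` whose vertices
outside `A` are exactly those of `S`. -/
def IsApex [DecidableEq V] (J : Set (Finset V)) (A : Set V) (S : Finset V) (v : V) : Prop :=
  v ∈ A ∧ ∀ F ∈ J, outside A F = S → insert v F ∈ J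

/-- Every face of `J` that sticks out of `A` can be coned off inside `J` by an apex in `A` that
depends only on the part sticking out. This makes the subcomplex of `J` induced on `A` a
deformation retract of `J`. -/
def HasApices [DecidableEq V] (J : Set (Finset V)) (A : Set V) : Prop :=
  ∀ F ∈ J, (outside A F).Nonempty → ∃ v, IsApex J A (outside A F) v

/-- The faces of `J` of cardinality `c` with at most `N` vertices outside `A`. -/
def facesOutsideLE {V : Type} (J : Set (Finset V)) (A : Set V) (c N : ℕ) : Set (Finset V) :=
  {F | F ∈ sFaces J c ∧ (outside A F).card ≤ N}

theorem facesOutsideLE_of_le {V : Type} {J : Set (Finset V)} {A : Set V} {c N : ℕ} (hc : c ≤ N) :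
    facesOutsideLE J A c N = sFaces J c := by
  refine Set.Subset.antisymm (fun F hF => hF.1) fun F hF => ⟨hF, ?_⟩
  exact (Finset.card_le_card (outside_subset A F)).trans (hF.1.trans_le hc)

end Outside

section Deformation

variable (k : Type) [Field k] {V : Type} [LinearOrder V] (J : Set (Finset V)) (A : Set V)

open Classical in
/-- The chain homotopy that cones every face sticking out of `A` to an apex for its part outside
`A`. Sets without apex, and those contained in `A`, are sent to `0`. -/
noncomputable def contraction : (Finset V →₀ k) →ₗ[k] (Finset V →₀ k) :=
  Finsupp.linearCombination k fun F =>
    if h : (outside A F).Nonempty ∧ ∃ v, IsApex J A (outside A F) v then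
      coneMap k h.2.choose (Finsupp.single F 1)
    else 0

/-- The chain map `1 - ∂H - H∂`, where `H` is the `contraction`. It is homotopic to the identity. -/
noncomputable def deformation : Module.End k (Finset V →₀ k) :=
  LinearMap.id - sBoundary k ∘ₗ contraction k J A - contraction k J A ∘ₗ sBoundary k

theorem deformation_apply (c : Finset V →₀ k) :
    deformation k J A c =
      c - sBoundary k (contraction k J A c) - contraction k J A (sBoundary k c) :=
  rfl

theorem sBoundary_deformation (c : Finset V →₀ k) :
    sBoundary k (deformation k J A c) = deformation k J A (sBoundary k c) := by
  simp only [deformation_apply, map_sub, sBoundary_sBoundary, map_zero, sub_zero]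

theorem sBoundary_deformation_pow (N : ℕ) (c : Finset V →₀ k) :
    sBoundary k ((deformation k J A ^ N) c) = (deformation k J A ^ N) (sBoundary k c) := by
  induction N generalizing c with
  | zero => rfl
  | succ N ih => rw [pow_succ, Module.End.mul_apply, Module.End.mul_apply, ih,
      sBoundary_deformation]

variable {J A}

theorem contraction_single_of_outside_eq_empty {F : Finset V} (hF : outside A F = ∅) :
    contraction k J A (Finsupp.single F 1) = 0 := by
  simp [contraction, hF]

theorem IsApex.exists_contraction_single_eq {S : Finset V} {v : V} (hv : IsApex J A S v)
    (hS : S.Nonempty) : ∃ w, IsApex J A S w ∧ ∀ F, outside A F = S →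
      contraction k J A (Finsupp.single F 1) = coneMap k w (Finsupp.single F 1) := by
  have hex : ∃ v, IsApex J A S v := ⟨v, hv⟩
  refine ⟨hex.choose, hex.choose_spec, ?_⟩
  rintro F rfl
  simp [contraction, hS, hex]

theorem deformation_of_mem_supported {c : Finset V →₀ k}
    (hc : c ∈ Finsupp.supported k k {F : Finset V | (F : Set V) ⊆ A}) :
    deformation k J A c = c := by
  suffices Finsupp.supported k k {F : Finset V | (F : Set V) ⊆ A} ≤
      LinearMap.eqLocus (deformation k J A) LinearMap.id from this hc
  rw [Finsupp.supported_eq_span_single, Submodule.span_le]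
  rintro _ ⟨F, hF, rfl⟩
  have contraction_eq_zero {G : Finset V} (hGF : G ⊆ F) :
      contraction k J A (Finsupp.single G 1) = 0 :=
    contraction_single_of_outside_eq_empty k
      (outside_eq_empty_iff.mpr ((Finset.coe_subset.mpr hGF).trans hF))
  change deformation k J A (Finsupp.single F 1) = Finsupp.single F 1
  rw [deformation_apply, contraction_eq_zero subset_rfl, map_zero, sub_zero, sub_eq_self,
    sBoundary_single, map_sum]
  refine Finset.sum_eq_zero fun x _ => ?_
  rw [map_smul, contraction_eq_zero (Finset.erase_subset x F), smul_zero]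

theorem deformation_pow_of_mem_supported {c : Finset V →₀ k}
    (hc : c ∈ Finsupp.supported k k {F : Finset V | (F : Set V) ⊆ A}) (N : ℕ) :
    (deformation k J A ^ N) c = c := by
  induction N with
  | zero => rfl
  | succ N ih => rw [pow_succ, Module.End.mul_apply, deformation_of_mem_supported k hc, ih]

theorem deformation_single_of_contraction_eq {F : Finset V} {v : V}
    (h : contraction k J A (Finsupp.single F 1) = coneMap k v (Finsupp.single F 1)) :
    deformation k J A (Finsupp.single F 1) =
      ∑ x ∈ F, vertexSign k x F • (coneMap k v (Finsupp.single (F.erase x) 1) -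
        contraction k J A (Finsupp.single (F.erase x) 1)) := by
  rw [deformation_apply, h, sBoundary_coneMap, sub_sub_cancel, ← LinearMap.sub_apply,
    sBoundary_single, map_sum]
  simp only [map_smul, LinearMap.sub_apply]

theorem coneMap_single_mem_supported {F : Finset V} {v : V} {N : ℕ} (hv : v ∈ A)
    (hvF : insert v F ∈ J) (hN : (outside A F).card ≤ N) :
    coneMap k v (Finsupp.single F 1) ∈
      Finsupp.supported k k (facesOutsideLE J A (F.card + 1) N) := by
  by_cases hmem : v ∈ F
  · rw [coneMap_single_of_mem k hmem]
    exact Submodule.zero_mem _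
  · rw [coneMap_single_of_notMem k hmem]
    refine Submodule.smul_mem _ _ (Finsupp.single_mem_supported k _ ⟨⟨?_, Or.inr hvF⟩, ?_⟩)
    · exact Finset.card_insert_of_notMem hmem
    · rwa [outside_insert_of_mem hv]

theorem HasApices.contraction_single_mem_supported (hA : HasApices J A) {F : Finset V} {c N : ℕ}
    (hF : F ∈ facesOutsideLE J A c N) :
    contraction k J A (Finsupp.single F 1) ∈
      Finsupp.supported k k (facesOutsideLE J A (c + 1) N) := by
  obtain ⟨⟨rfl, hFJ⟩, hN⟩ := hF
  rcases (outside A F).eq_empty_or_nonempty with hout | hout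
  · rw [contraction_single_of_outside_eq_empty k hout]
    exact Submodule.zero_mem _
  · have hFJ : F ∈ J := hFJ.resolve_left (hout.mono (outside_subset A F)).ne_empty
    obtain ⟨_, hv⟩ := hA F hFJ hout
    obtain ⟨v, ⟨hvA, hvJ⟩, hcontr⟩ := hv.exists_contraction_single_eq k hout
    rw [hcontr F rfl]
    exact coneMap_single_mem_supported k hvA (hvJ F hFJ rfl) hN

theorem HasApices.deformation_single_mem_supported (hA : HasApices J A)
    (hJ : IsRelLowerSet J Finset.Nonempty) {F : Finset V} {c N : ℕ}
    (hF : F ∈ facesOutsideLE J A c (N + 1)) :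
    deformation k J A (Finsupp.single F 1) ∈ Finsupp.supported k k (facesOutsideLE J A c N) := by
  rcases (outside A F).eq_empty_or_nonempty with hout | hout
  · rw [deformation_of_mem_supported k
      (Finsupp.single_mem_supported k _ (outside_eq_empty_iff.mp hout :))]
    exact Finsupp.single_mem_supported k _ ⟨hF.1, by simp [hout]⟩
  obtain ⟨⟨rfl, hFJ⟩, hN⟩ := hF
  replace hFJ : F ∈ J := hFJ.resolve_left (hout.mono (outside_subset A F)).ne_empty
  obtain ⟨_, hv⟩ := hA F hFJ hout
  obtain ⟨v, ⟨hvA, hvJ⟩, hcontr⟩ := hv.exists_contraction_single_eq k hout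
  rw [deformation_single_of_contraction_eq k (hcontr F rfl)]
  refine Submodule.sum_mem _ fun x hxF => Submodule.smul_mem _ _ ?_
  by_cases hxA : x ∈ A
  · rw [hcontr _ (outside_erase_of_mem hxA F), sub_self]
    exact Submodule.zero_mem _
  · have houtN : (outside A (F.erase x)).card ≤ N := by
      rw [outside_erase, Finset.card_erase_of_mem (mem_outside.mpr ⟨hxF, hxA⟩)]
      exact Nat.sub_le_of_le_add hN
    have hvface : insert v (F.erase x) ∈ J :=
      hJ.mem_of_le (hvJ F hFJ rfl) (Finset.insert_subset_insert v (Finset.erase_subset x F))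
        (Finset.insert_nonempty v _)
    have hface : F.erase x ∈ facesOutsideLE J A (F.erase x).card N :=
      ⟨⟨rfl, (F.erase x).eq_empty_or_nonempty.imp_right
        (hJ.mem_of_le hFJ (Finset.erase_subset x F))⟩, houtN⟩
    rw [← Finset.card_erase_add_one hxF]
    exact Submodule.sub_mem _ (coneMap_single_mem_supported k hvA hvface houtN)
      (hA.contraction_single_mem_supported k hface)

theorem HasApices.deformation_pow_mem_supported (hA : HasApices J A)
    (hJ : IsRelLowerSet J Finset.Nonempty) {c N : ℕ} {z : Finset V →₀ k}
    (hz : z ∈ Finsupp.supported k k (facesOutsideLE J A c N)) :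
    (deformation k J A ^ N) z ∈ Finsupp.supported k k (facesOutsideLE J A c 0) := by
  induction N generalizing z with
  | zero => exact hz
  | succ N ih =>
    rw [pow_succ, Module.End.mul_apply]
    exact ih (map_supported_le_iff.mpr
      (fun F hF => hA.deformation_single_mem_supported k hJ hF) ⟨z, hz, rfl⟩)

theorem HasApices.contraction_mem_supported (hA : HasApices J A) {c : ℕ} {z : Finset V →₀ k}
    (hz : z ∈ Finsupp.supported k k (sFaces J c)) :
    contraction k J A z ∈ Finsupp.supported k k (sFaces J (c + 1)) := by
  rw [← facesOutsideLE_of_le (A := A) le_rfl]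
  refine map_supported_le_iff.mpr (fun F hF => ?_) ⟨z, hz, rfl⟩
  rw [← facesOutsideLE_of_le (A := A) c.le_succ] at hF
  exact hA.contraction_single_mem_supported k hF

theorem HasApices.deformation_mem_sCycles (hA : HasApices J A)
    (hJ : IsRelLowerSet J Finset.Nonempty) {j : ℕ} {z : Finset V →₀ k} (hz : z ∈ sCycles k J j) :
    deformation k J A z ∈ sCycles k J j := by
  obtain ⟨hzJ, hz0 : sBoundary k z = 0⟩ := hz
  refine ⟨?_, LinearMap.mem_ker.mpr (by rw [sBoundary_deformation, hz0, map_zero])⟩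
  rw [← facesOutsideLE_of_le (A := A) le_rfl]
  refine map_supported_le_iff.mpr (fun F hF => ?_) ⟨z, hzJ, rfl⟩
  rw [← facesOutsideLE_of_le (A := A) (j + 1).le_succ] at hF
  exact hA.deformation_single_mem_supported k hJ hF

theorem HasApices.sub_deformation_pow_mem_sBoundaries (hA : HasApices J A)
    (hJ : IsRelLowerSet J Finset.Nonempty) {j : ℕ} {z : Finset V →₀ k} (hz : z ∈ sCycles k J j)
    (N : ℕ) : z - (deformation k J A ^ N) z ∈ sBoundaries k J j := by
  induction N generalizing z with
  | zero => simp
  | succ N ih =>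
    have homotopic_step : z - deformation k J A z ∈ sBoundaries k J j := by
      obtain ⟨hzJ, hz0 : sBoundary k z = 0⟩ := hz
      rw [deformation_apply, hz0, map_zero, sub_zero, sub_sub_cancel]
      exact ⟨_, hA.contraction_mem_supported k hzJ, rfl⟩
    rw [pow_succ, Module.End.mul_apply, ← sub_add_sub_cancel z (deformation k J A z)]
    exact Submodule.add_mem _ homotopic_step (ih (hA.deformation_mem_sCycles k hJ hz))

end Deformation

section Equivalence

variable (k : Type) [Field k] {X V : Type} [LinearOrder X] [LinearOrder V]

/-- The chain map induced by an order embedding of the vertex sets. Preserving the order, it needs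
no signs. -/
noncomputable def chainMap (a : X ↪o V) : (Finset X →₀ k) →ₗ[k] (Finset V →₀ k) :=
  Finsupp.lmapDomain k k (Finset.map a.toEmbedding)

theorem chainMap_single (a : X ↪o V) (F : Finset X) :
    chainMap k a (Finsupp.single F 1) = Finsupp.single (F.map a.toEmbedding) 1 :=
  Finsupp.mapDomain_single

theorem chainMap_injective (a : X ↪o V) : Function.Injective (chainMap k a) :=
  Finsupp.mapDomain_injective (Finset.map_injective _)

theorem sBoundary_chainMap (a : X ↪o V) (c : Finset X →₀ k) :
    sBoundary k (chainMap k a c) = chainMap k a (sBoundary k c) := by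
  suffices sBoundary k ∘ₗ chainMap k a = chainMap k a ∘ₗ sBoundary k from
    LinearMap.congr_fun this c
  ext F : 2
  change sBoundary k (chainMap k a (Finsupp.single F 1)) =
    chainMap k a (sBoundary k (Finsupp.single F 1))
  rw [chainMap_single, sBoundary_single, sBoundary_single, map_sum, Finset.sum_map]
  refine Finset.sum_congr rfl fun x _ => ?_
  rw [map_smul, chainMap_single, Finset.map_erase, RelEmbedding.coe_toEmbedding, vertexSign_map]

theorem chainMap_mem_supported (a : X ↪o V) (c : Finset X →₀ k) :
    chainMap k a c ∈ Finsupp.supported k k {F : Finset V | (F : Set V) ⊆ Set.range a} := by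
  have hc : c ∈ Finsupp.supported k k Set.univ := by simp
  refine map_supported_le_iff.mpr (fun F _ => ?_) ⟨c, hc, rfl⟩
  rw [chainMap_single]
  exact Finsupp.single_mem_supported k _ (by simp)

theorem map_chainMap_supported (a : X ↪o V) {J : Set (Finset V)} (c : ℕ) :
    (Finsupp.supported k k (sFaces (Finset.map a.toEmbedding ⁻¹' J) c)).map (chainMap k a) =
      Finsupp.supported k k (facesOutsideLE J (Set.range a) c 0) := by
  rw [chainMap, Finsupp.lmapDomain_supported]
  congr 1
  ext G
  constructor
  · rintro ⟨F, ⟨hcard, hF⟩, rfl⟩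
    refine ⟨⟨by rwa [Finset.card_map], hF.imp_left (by rintro rfl; simp)⟩, ?_⟩
    rw [Nat.le_zero, Finset.card_eq_zero, outside_eq_empty_iff]
    simp
  · rintro ⟨⟨hcard, hG⟩, hout⟩
    rw [Nat.le_zero, Finset.card_eq_zero, outside_eq_empty_iff] at hout
    obtain ⟨F, rfl⟩ : ∃ F : Finset X, F.map a.toEmbedding = G := by
      classical
      rw [← Set.image_univ, Finset.subset_set_image_iff] at hout
      obtain ⟨F, -, rfl⟩ := hout
      exact ⟨F, Finset.map_eq_image _ _⟩
    rw [Finset.card_map] at hcard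
    exact ⟨F, ⟨hcard, hG.imp_left Finset.map_eq_empty.mp⟩, rfl⟩

theorem map_chainMap_sCycles_le (a : X ↪o V) {J : Set (Finset V)} (j : ℕ) :
    (sCycles k (Finset.map a.toEmbedding ⁻¹' J) j).map (chainMap k a) ≤ sCycles k J j := by
  rintro _ ⟨z, ⟨hzK, hz0 : sBoundary k z = 0⟩, rfl⟩
  have hface : chainMap k a z ∈ Finsupp.supported k k (facesOutsideLE J (Set.range a) (j + 1) 0) :=
    map_chainMap_supported k a (j + 1) ▸ ⟨z, hzK, rfl⟩
  refine ⟨Finsupp.supported_mono (fun F hF => hF.1) hface, LinearMap.mem_ker.mpr ?_⟩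
  rw [sBoundary_chainMap, hz0, map_zero]

variable {k}

theorem HasApices.exists_chainMap_eq_deformation_pow {a : X ↪o V} {J : Set (Finset V)}
    (hA : HasApices J (Set.range a)) (hJ : IsRelLowerSet J Finset.Nonempty) {c N : ℕ} (hc : c ≤ N)
    {d : Finset V →₀ k} (hd : d ∈ Finsupp.supported k k (sFaces J c)) :
    ∃ d' ∈ Finsupp.supported k k (sFaces (Finset.map a.toEmbedding ⁻¹' J) c),
      chainMap k a d' = (deformation k J (Set.range a) ^ N) d := by
  rw [← facesOutsideLE_of_le (A := Set.range a) hc] at hd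
  have hpush := hA.deformation_pow_mem_supported k hJ hd
  rwa [← map_chainMap_supported] at hpush

theorem HasApices.comap_chainMap_sBoundaries {a : X ↪o V} {J : Set (Finset V)}
    (hA : HasApices J (Set.range a)) (hJ : IsRelLowerSet J Finset.Nonempty) (j : ℕ) :
    (sBoundaries k J j).comap (chainMap k a) =
      sBoundaries k (Finset.map a.toEmbedding ⁻¹' J) j := by
  refine le_antisymm (fun z hz => ?_) ?_
  · obtain ⟨d, hd, hdz⟩ := hz
    obtain ⟨d', hd', hdd'⟩ := hA.exists_chainMap_eq_deformation_pow hJ le_rfl hd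
    refine ⟨d', hd', chainMap_injective k a ?_⟩
    rw [← sBoundary_chainMap, hdd', sBoundary_deformation_pow, hdz,
      deformation_pow_of_mem_supported k (chainMap_mem_supported k a z)]
  · rintro _ ⟨d, hd, rfl⟩
    have hface : chainMap k a d ∈
        Finsupp.supported k k (facesOutsideLE J (Set.range a) (j + 2) 0) :=
      map_chainMap_supported k a (j + 2) ▸ ⟨d, hd, rfl⟩
    exact ⟨_, Finsupp.supported_mono (fun F hF => hF.1) hface, sBoundary_chainMap k a d⟩

theorem HasApices.sCycles_le_map_chainMap_sup {a : X ↪o V} {J : Set (Finset V)}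
    (hA : HasApices J (Set.range a)) (hJ : IsRelLowerSet J Finset.Nonempty) (j : ℕ) :
    sCycles k J j ≤ (sCycles k (Finset.map a.toEmbedding ⁻¹' J) j).map (chainMap k a) ⊔
      sBoundaries k J j := by
  intro z hz
  obtain ⟨c, hc, hcz⟩ := hA.exists_chainMap_eq_deformation_pow hJ le_rfl hz.1
  have hc0 : sBoundary k c = 0 := by
    apply chainMap_injective k a
    rw [← sBoundary_chainMap, hcz, sBoundary_deformation_pow, LinearMap.mem_ker.mp hz.2, map_zero,
      map_zero]
  rw [← add_sub_cancel (chainMap k a c) z]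
  refine Submodule.add_mem_sup ⟨c, ⟨hc, hc0⟩, rfl⟩ ?_
  rw [hcz]
  exact hA.sub_deformation_pow_mem_sBoundaries k hJ hz (j + 1)

theorem HasApices.nonempty_sHred_equiv {a : X ↪o V} {J : Set (Finset V)}
    (hA : HasApices J (Set.range a)) (hJ : IsRelLowerSet J Finset.Nonempty) (j : ℕ) :
    Nonempty (↥(sHred k (Finset.map a.toEmbedding ⁻¹' J) j) ≃ₗ[k] ↥(sHred k J j)) :=
  nonempty_map_mkQ_equiv (chainMap k a) (hA.comap_chainMap_sBoundaries hJ j) <|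
    le_antisymm (sup_le_sup_right (map_chainMap_sCycles_le k a j) _)
      (sup_le (hA.sCycles_le_map_chainMap_sup hJ j) le_sup_right)

end Equivalence

section Dowker

/-- The Dowker complex of a relation: finite nonempty sets of elements related to a common
element. -/
def dowkerComplex {X Y : Type*} (R : X → Y → Prop) : Set (Finset X) :=
  {F | F.Nonempty ∧ ∃ y, ∀ x ∈ F, R x y}

/-- The complex on the disjoint union `V` of (the images under `a` and `b` of) `X` and `Y` whose
faces are the unions of finite `F ⊆ X` and `H ⊆ Y`, not both empty, such that all elements of `F`
are related to all elements of `H`, those of `F` to some common `y` and those of `H` to some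
common `x`. The last two conditions matter only if `H` or `F` is empty. -/
def jointComplex {X Y V : Type*} (a : X → V) (b : Y → V) (R : X → Y → Prop) : Set (Finset V) :=
  {F | F.Nonempty ∧ (∀ x y, a x ∈ F → b y ∈ F → R x y) ∧ (∃ y, ∀ x, a x ∈ F → R x y) ∧
    ∃ x, ∀ y, b y ∈ F → R x y}

variable {X Y V : Type*} {a : X → V} {b : Y → V} {R : X → Y → Prop}

theorem jointComplex_swap : jointComplex b a (Function.swap R) = jointComplex a b R := by
  ext F
  simp only [jointComplex, Set.mem_ofPred_eq, Function.swap]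
  rw [forall_comm, and_comm (a := ∃ x, ∀ y, b y ∈ F → R x y)]
  simp only [imp.swap]

theorem isRelLowerSet_jointComplex : IsRelLowerSet (jointComplex a b R) Finset.Nonempty := by
  rintro F ⟨hF, hRF, ⟨y, hy⟩, x, hx⟩
  exact ⟨hF, fun G hGF hG => ⟨hG, fun x y hx hy => hRF x y (hGF hx) (hGF hy),
    ⟨y, fun x hx => hy x (hGF hx)⟩, x, fun y hy => hx y (hGF hy)⟩⟩

theorem hasApices_jointComplex [DecidableEq V] (ha : Function.Injective a)
    (hab : IsCompl (Set.range a) (Set.range b)) :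
    HasApices (jointComplex a b R) (Set.range a) := by
  have mem_range_b {v : V} : v ∉ Set.range a ↔ v ∈ Set.range b := by
    rw [← Set.mem_compl_iff, hab.compl_eq]
  rintro F ⟨-, -, -, x, hx⟩ ⟨v, hv⟩
  refine ⟨a x, ⟨x, rfl⟩, ?_⟩
  rintro G ⟨-, hRG, -, -⟩ hGF
  have mem_iff (y : Y) : b y ∈ insert (a x) G ↔ b y ∈ outside (Set.range a) G := by
    have hby : b y ∉ Set.range a := mem_range_b.mpr ⟨y, rfl⟩
    have hne : b y ≠ a x := fun h => hby ⟨x, h.symm⟩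
    simp only [mem_outside, Finset.mem_insert, hne, hby, false_or, not_false_iff, and_true]
  have apex_related {y : Y} (hy : b y ∈ insert (a x) G) : R x y :=
    hx y (outside_subset _ _ (hGF ▸ (mem_iff y).mp hy))
  have related (x' : X) (y : Y) (hx' : a x' ∈ insert (a x) G) (hy : b y ∈ insert (a x) G) :
      R x' y := by
    rcases Finset.mem_insert.mp hx' with h | hx'
    · exact ha h ▸ apex_related hy
    · exact hRG x' y hx' (outside_subset _ _ ((mem_iff y).mp hy))
  obtain ⟨y, rfl⟩ := mem_range_b.mp (mem_outside.mp hv).2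
  exact ⟨Finset.insert_nonempty _ _, related,
    ⟨y, fun x' hx' => related x' y hx' ((mem_iff y).mpr (hGF ▸ hv))⟩, x, fun _ => apex_related⟩

theorem map_preimage_jointComplex (a : X ↪ V) {b : Y → V}
    (hab : Disjoint (Set.range a) (Set.range b)) :
    Finset.map a ⁻¹' jointComplex a b R = dowkerComplex R := by
  have notMem_map (F : Finset X) (y : Y) : b y ∉ F.map a := fun hy => by
    obtain ⟨x, -, hx⟩ := Finset.mem_map.mp hy
    exact Set.disjoint_left.mp hab ⟨x, rfl⟩ ⟨y, hx.symm⟩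
  ext F
  simp only [jointComplex, dowkerComplex, Set.mem_preimage, Set.mem_ofPred_eq, Finset.map_nonempty,
    Finset.mem_map', notMem_map]
  exact ⟨fun ⟨hF, _, hy, _⟩ => ⟨hF, hy⟩,
    fun ⟨hF, hy⟩ => ⟨hF, fun _ _ _ h => h.elim, hy, hF.imp fun _ _ _ h => h.elim⟩⟩

end Dowker

section Duality

variable (k : Type) [Field k] {X Y : Type} [LinearOrder X] (R : X → Y → Prop)

theorem nonempty_sHred_dowkerComplex_equiv_jointComplex {V : Type} [LinearOrder V] (a : X ↪o V)
    {b : Y → V} (hab : IsCompl (Set.range a) (Set.range b)) (j : ℕ) :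
    Nonempty (↥(sHred k (dowkerComplex R) j) ≃ₗ[k] ↥(sHred k (jointComplex a b R) j)) := by
  rw [← map_preimage_jointComplex a.toEmbedding hab.disjoint]
  exact (hasApices_jointComplex a.injective hab).nonempty_sHred_equiv
    isRelLowerSet_jointComplex j

theorem nonempty_sHred_dowkerComplex_equiv_swap [LinearOrder Y] (j : ℕ) :
    Nonempty (↥(sHred k (dowkerComplex R) j) ≃ₗ[k]
      ↥(sHred k (dowkerComplex (Function.swap R)) j)) := by
  let a : X ↪o X ⊕ₗ Y := OrderEmbedding.ofStrictMono _ Sum.Lex.inl_strictMono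
  let b : Y ↪o X ⊕ₗ Y := OrderEmbedding.ofStrictMono _ Sum.Lex.inr_strictMono
  have hab : IsCompl (Set.range a) (Set.range b) := Set.isCompl_range_inl_range_inr
  obtain ⟨eX⟩ := nonempty_sHred_dowkerComplex_equiv_jointComplex k R a hab j
  obtain ⟨eY⟩ := nonempty_sHred_dowkerComplex_equiv_jointComplex k (Function.swap R) b hab.symm j
  rw [jointComplex_swap] at eY
  exact ⟨eX.trans eY.symm⟩

end Duality

section Semigroup

variable {M ι : Type*} [AddCommMonoid M]

theorem exists_mem_closure_sum_add_eq_iff {n : ι → M} {m : M} {F : Finset ι} :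
    (∃ s ∈ AddSubmonoid.closure (Set.range n), ∑ i ∈ F, n i + s = m) ↔
      ∃ α : ι →₀ ℕ, (α.sum fun i e => e • n i) = m ∧ ∀ i ∈ F, 0 < α i := by
  classical
  let ε : ι →₀ ℕ := ∑ i ∈ F, Finsupp.single i 1
  have ε_apply (i : ι) : ε i = if i ∈ F then 1 else 0 := by
    simp [ε, Finsupp.finsetSum_apply, Finsupp.single_apply]
  have sum_ε_add (α : ι →₀ ℕ) : ((ε + α).sum fun i e => e • n i) =
      ∑ i ∈ F, n i + α.sum fun i e => e • n i := by
    simp only [← Finsupp.linearCombination_apply, map_add, ε, map_sum,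
      Finsupp.linearCombination_single, one_smul]
  constructor
  · rintro ⟨s, hs, rfl⟩
    obtain ⟨α, rfl⟩ := AddSubmonoid.mem_closure_range_iff.mp hs
    refine ⟨ε + α, sum_ε_add α, fun i hi => ?_⟩
    rw [Finsupp.add_apply, ε_apply, if_pos hi]
    exact Nat.add_pos_left one_pos _
  · rintro ⟨α, rfl, hα⟩
    have hεα : ε ≤ α := fun i => by
      rw [ε_apply]
      split_ifs with hi
      · exact hα i hi
      · exact Nat.zero_le _
    refine ⟨_, AddSubmonoid.mem_closure_range_iff.mpr ⟨α - ε, rfl⟩, ?_⟩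
    rw [← sum_ε_add, add_tsub_cancel_of_le hεα]

end Semigroup

section Factorization

variable {G : Type} [AddCommGroup G] {r : ℕ}

/-- The relation between factorizations `α ∈ C_m` and generators occurring in them. -/
def FactorizationUses (n : Fin r → G) (m : G) (α : Lex (Fin r →₀ ℕ)) (i : Fin r) : Prop :=
  ((ofLex α).sum fun i e => e • n i) = m ∧ 0 < ofLex α i

theorem nablaLex_eq_dowkerComplex (n : Fin r → G) (m : G) :
    nablaLex n m = dowkerComplex (FactorizationUses n m) := by
  ext F
  refine and_congr_right fun _ => ?_
  simp only [FactorizationUses, forall₂_and, exists_and_left]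

theorem deltaComplex_closure_eq_dowkerComplex (n : Fin r → G) (m : G) :
    deltaComplex (AddSubmonoid.closure (Set.range n)) n m =
      dowkerComplex (Function.swap (FactorizationUses n m)) := by
  ext F
  refine and_congr_right fun hF => exists_mem_closure_sum_add_eq_iff.trans ?_
  obtain ⟨i, hi⟩ := hF
  exact ⟨fun ⟨α, hm, hα⟩ => ⟨toLex α, fun i hi => ⟨hm, hα i hi⟩⟩,
    fun ⟨α, hα⟩ => ⟨ofLex α, (hα i hi).1, fun i hi => (hα i hi).2⟩⟩

end Factorization

theorem homology_nabla_iso_homology_delta_general {G : Type} [AddCommGroup G] (k : Type) [Field k]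
    (S : AddSubmonoid G) {r : ℕ} (n : Fin r → G) (hgen : S = AddSubmonoid.closure (Set.range n))
    (m : G) (j : ℕ) :
    Nonempty (↥(sHred k (nablaLex n m) j) ≃ₗ[k] ↥(sHred k (deltaComplex S n m) j)) := by
  rw [hgen, nablaLex_eq_dowkerComplex, deltaComplex_closure_eq_dowkerComplex]
  exact nonempty_sHred_dowkerComplex_equiv_swap k _ j

/-- For all `j ≥ 0` and all `m ∈ S`, the reduced simplicial homology groups over the
field `k` satisfy `H̃_j(∇_m) ≅ H̃_j(Δ_m)`. -/
theorem homology_nabla_iso_homology_delta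
    {G : Type} [AddCommGroup G] (k : Type) [Field k]
    (S : AddSubmonoid G) (hFG : S.FG) (hcf : ∀ g ∈ S, -g ∈ S → g = 0)
    {r : ℕ} (n : Fin r → G) (hn : ∀ i, n i ≠ 0)
    (hgen : S = AddSubmonoid.closure (Set.range n))
    (m : G) (hm : m ∈ S) :
    ∀ j : ℕ, Nonempty
      (↥(sHred k (nablaLex n m) j) ≃ₗ[k] ↥(sHred k (deltaComplex S n m) j)) := by
  exact homology_nabla_iso_homology_delta_general k S n hgen m
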